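/- Let $d\ge 5$, $k\in\mathbb{N}$, $1\le j\le\log_2(k)-2$, and set $\varepsilon=2^{-2k}$. With $s_t(m)=e^{2\pi i|m|^2(t+i\varepsilon)}$, $\widehat{s_t}(\alpha)=\sum_{m\in\mathbb{Z}^d}s_t(m)e^{-2\pi i m\cdot\alpha}$, and $V_{a,q}$ the Farey arcs at level $2^k$, there is a constant $C_d$ such that $\sum_{1\le q\le 2^k,\ q\mid q_j}\ \sum_{0<a\le q,\ \gcd(a,q)=1}\int_{V_{a,q}}\sup_{\alpha\in\Omega_{j,k}^c}|\widehat{s_t}(\alpha)|\,dt\ \le\ C_d\,\varepsilon^{-(d-2)/2}\,2^{-j(d-2)/4}$. -/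

import Mathlib

open scoped BigOperators Real ENNReal

noncomputable section

/-- Squared Euclidean norm of a lattice point, as a real number. -/
def nsq {d : ℕ} (m : Fin d → ℤ) : ℝ := ∑ i, ((m i : ℝ)) ^ 2

/-- `s_t(m) = e^{2πi|m|²(t+iε)}`. -/
def sFun {d : ℕ} (ε t : ℝ) (m : Fin d → ℤ) : ℂ :=
  Complex.exp (2 * (π : ℂ) * Complex.I * (nsq m : ℝ) * ((t : ℂ) + Complex.I * (ε : ℝ)))

/-- The Fourier transform `ŝ_t(α) = ∑_m s_t(m) e^{-2πi m·α}`. -/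
def sHat {d : ℕ} (ε t : ℝ) (α : Fin d → ℝ) : ℂ :=
  ∑' m : Fin d → ℤ,
    sFun ε t m * Complex.exp (-(2 * (π : ℂ) * Complex.I) * (∑ i, (m i : ℝ) * α i))

/-- `q_j = lcm{1,2,…,2^j}`. -/
def qlcm (j : ℕ) : ℕ := (Finset.Icc 1 (2 ^ j)).lcm id

/-- `Ω_{j,k} = [-2^{j-k}, 2^{j-k}]^d + (q_j⁻¹ ℤ)^d`, as a ℤ^d-periodic subset of `ℝ^d`. -/
def OmegaJK (d j k : ℕ) : Set (Fin d → ℝ) :=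
  {α | ∃ ℓ : Fin d → ℤ, ∀ i, |α i - (ℓ i : ℝ) / (qlcm j : ℝ)| ≤ (2 : ℝ) ^ ((j : ℤ) - (k : ℤ))}

/-- The set `H` of reduced fractions `a/q` with `1 ≤ q ≤ 2^k`, `0 < a ≤ q`. -/
def FareyH (k : ℕ) : Set ℝ :=
  {x | ∃ a q : ℕ, 1 ≤ q ∧ q ≤ 2 ^ k ∧ 0 < a ∧ a ≤ q ∧ Nat.Coprime a q ∧ x = (a : ℝ) / q}

/-- The Farey arc `V_{a,q}` at level `2^k`. -/
def FareyArc (k a q : ℕ) : Set ℝ :=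
  {t | t ∈ Set.Icc (0 : ℝ) 1 ∧ |t - (a : ℝ) / q| = ⨅ r : FareyH k, |t - (r : ℝ)|}

/-! The transform `ŝ_t(α)` is a product over the coordinates of Jacobi theta functions at
`2 (t + iε)`. Write `t + iε = a / q + w`. Fourier inversion modulo `q`, Poisson summation and the
bound `√(2 q)` for quadratic Gauss sums give each factor the size `(q |w|)^(-1/2)`, with Gaussian
decay in the distance from `α i` to `(1/q) ℤ`. If `q ∣ q_j` and `α ∉ Ω_{j,k}`, some coordinate has
distance more than `2^(j-k)`; its decay replaces the singularity `|w|^(-d/2)`, of width `ε`, by one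
of width `2^j ε`. Integrating over `t` yields `q^(-d/2) (2^j ε)^(-(d-2)/2)`, and the sum over `a`
and `q` converges because `d ≥ 5`. Since `q_j ≤ 2^(k-1)`, every arc involved lies within
`1 / (q 2^k)` of `a / q`, which is what makes the Gaussian sums uniformly bounded. -/

open scoped Finset

/-! ### Quadratic Gauss sums -/

section GaussSum

variable {R : Type*} [CommRing R] [Fintype R] [DecidableEq R]

/-- Differencing the quadratic phase leaves a linear character sum in the base point, which
vanishes off the 2-torsion. -/
lemma norm_sq_sum_addChar_quadratic_le {ψ : AddChar R ℂ} (hψ : ψ.IsPrimitive) {a : R}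
    (ha : IsUnit a) (b : R) :
    ‖∑ x, ψ (a * x ^ 2 + b * x)‖ ^ 2 ≤ Fintype.card R * #{h : R | 2 * h = 0} := by
  set G := ∑ x, ψ (a * x ^ 2 + b * x)
  have differencing : G * (starRingEnd ℂ) G =
      ∑ h, ψ (a * h ^ 2 + b * h) * ∑ y, ψ (y * (2 * a * h)) := by
    simp_rw [Finset.mul_sum]
    rw [map_sum, Finset.sum_mul_sum, Finset.sum_comm]
    conv_rhs => rw [Finset.sum_comm]
    refine Finset.sum_congr rfl fun y _ ↦ ?_
    rw [← Equiv.sum_comp (Equiv.addRight y)]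
    refine Finset.sum_congr rfl fun h _ ↦ ?_
    rw [← AddChar.map_neg_eq_conj, ← AddChar.map_add_eq_mul, ← AddChar.map_add_eq_mul,
      Equiv.coe_addRight]
    congr 1
    ring
  have torsion (h : R) : 2 * a * h = 0 ↔ 2 * h = 0 := by
    rw [show 2 * a * h = a * (2 * h) by ring, ha.mul_right_eq_zero]
  simp_rw [AddChar.sum_mulShift _ hψ, torsion] at differencing
  calc ‖G‖ ^ 2 = ‖G * (starRingEnd ℂ) G‖ := by rw [norm_mul, RCLike.norm_conj, sq]
    _ ≤ ∑ h : R, ‖ψ (a * h ^ 2 + b * h) * ((if 2 * h = 0 then Fintype.card R else 0 : ℕ) : ℂ)‖ :=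
      differencing ▸ norm_sum_le _ _
    _ = ∑ h : R, if 2 * h = 0 then (Fintype.card R : ℝ) else 0 := by
      refine Finset.sum_congr rfl fun h _ ↦ ?_
      rw [norm_mul, AddChar.norm_apply, one_mul, Complex.norm_natCast]
      split_ifs <;> simp only [Nat.cast_zero]
    _ = Fintype.card R * #{h : R | 2 * h = 0} := by
      rw [← Finset.sum_filter, Finset.sum_const, nsmul_eq_mul, mul_comm]

end GaussSum

lemma norm_dft_quadratic_le {q : ℕ} [NeZero q] {a : ZMod q} (ha : IsUnit a) (k : ZMod q) :
    ‖ZMod.dft (fun x : ZMod q ↦ (ZMod.stdAddChar (a * x ^ 2) : ℂ)) k‖ ≤ √(2 * q) := by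
  apply Real.le_sqrt_of_sq_le
  have htorsion : #{h : ZMod q | 2 * h = 0} ≤ 2 := by
    simpa only [nsmul_eq_mul, Nat.cast_ofNat] using
      IsAddCyclic.card_nsmul_eq_zero_le (α := ZMod q) two_pos
  have hdft : ZMod.dft (fun x : ZMod q ↦ (ZMod.stdAddChar (a * x ^ 2) : ℂ)) k =
      ∑ x, ZMod.stdAddChar (a * x ^ 2 + -k * x) := by
    rw [ZMod.dft_apply]
    refine Finset.sum_congr rfl fun x _ ↦ ?_
    rw [smul_eq_mul, ← AddChar.map_add_eq_mul]
    congr 1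
    ring
  calc _ ≤ (Fintype.card (ZMod q) * #{h : ZMod q | 2 * h = 0} : ℝ) :=
      hdft ▸ norm_sq_sum_addChar_quadratic_le (ZMod.isPrimitive_stdAddChar q) ha (-k)
    _ ≤ 2 * q := by
      rw [ZMod.card, mul_comm]
      gcongr
      exact_mod_cast htorsion

/-! ### Theta series near a rational -/

lemma summable_exp_neg_mul_sq_add_intCast {c : ℝ} (hc : 0 < c) (x : ℝ) :
    Summable fun l : ℤ ↦ Real.exp (-c * (x + l) ^ 2) := by
  have h := (summable_jacobiTheta₂_term_iff (Complex.I * ((c * x / π : ℝ) : ℂ))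
    (Complex.I * ((c / π : ℝ) : ℂ))).2 (by
      rw [Complex.I_mul_im, Complex.ofReal_re]
      positivity)
  refine (h.norm.mul_left (Real.exp (-c * x ^ 2))).congr fun l ↦ ?_
  rw [norm_jacobiTheta₂_term, ← Real.exp_add, Complex.I_mul_im, Complex.I_mul_im,
    Complex.ofReal_re, Complex.ofReal_re]
  congr 1
  field_simp
  ring

lemma tsum_exp_neg_mul_sq_add_intCast_le {c₀ c : ℝ} (hc₀ : 0 < c₀) (hc : c₀ ≤ c) (x : ℝ) :
    ∑' l : ℤ, Real.exp (-c * (x + l) ^ 2) ≤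
      Real.exp c₀ * ∑' l : ℤ, Real.exp (-(c₀ / 2) * (0 + l) ^ 2) := by
  set y := Int.fract x
  have hshift : ∑' l : ℤ, Real.exp (-c * (x + l) ^ 2) = ∑' l : ℤ, Real.exp (-c * (y + l) ^ 2) := by
    rw [← (Equiv.addRight (-⌊x⌋)).tsum_eq]
    refine tsum_congr fun l ↦ ?_
    rw [Equiv.coe_addRight, Int.cast_add, Int.cast_neg,
      show x + (l + -⌊x⌋) = y + l by unfold y; rw [← Int.self_sub_floor x]; ring]
  rw [hshift, ← tsum_mul_left]
  refine (summable_exp_neg_mul_sq_add_intCast (hc₀.trans_le hc) y).tsum_le_tsum (fun l ↦ ?_)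
    ((summable_exp_neg_mul_sq_add_intCast (half_pos hc₀) 0).mul_left _)
  rw [← Real.exp_add, Real.exp_le_exp]
  have hy₀ : 0 ≤ y := Int.fract_nonneg x
  have hy₁ : y < 1 := Int.fract_lt_one x
  have hl : (l : ℝ) ^ 2 ≤ 2 * (y + l) ^ 2 + 2 := by nlinarith [sq_nonneg (2 * y + l)]
  nlinarith [sq_nonneg (y + l)]

/-- Poisson summation for the theta series, with the squares completed. -/
lemma jacobiTheta₂_eq_tsum_exp (z : ℂ) {τ : ℂ} (hτ : τ ≠ 0) :
    jacobiTheta₂ z τ = 1 / (-Complex.I * τ) ^ (1 / 2 : ℂ) *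
      ∑' m : ℤ, Complex.exp (-π * Complex.I * (z + m) ^ 2 / τ) := by
  rw [jacobiTheta₂_functional_equation, jacobiTheta₂, mul_assoc, ← tsum_mul_left,
    ← (Equiv.neg ℤ).tsum_eq fun m : ℤ ↦ Complex.exp (-π * Complex.I * (z + m) ^ 2 / τ)]
  congr 2 with m
  rw [jacobiTheta₂_term, ← Complex.exp_add, Equiv.neg_apply]
  congr 1
  push_cast
  field_simp
  ring

lemma norm_cexp_neg_pi_mul_I_mul_sq_div (x : ℝ) (τ : ℂ) :
    ‖Complex.exp (-π * Complex.I * (x : ℂ) ^ 2 / τ)‖ =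
      Real.exp (-(π * τ.im / ‖τ‖ ^ 2) * x ^ 2) := by
  have hexponent : -π * Complex.I * (x : ℂ) ^ 2 / τ =
      ((-π * x ^ 2 : ℝ) : ℂ) * (Complex.I * τ⁻¹) := by
    push_cast
    ring
  rw [Complex.norm_exp, hexponent, Complex.re_ofReal_mul, Complex.I_mul_re, Complex.inv_im,
    Complex.normSq_eq_norm_sq]
  congr 1
  ring

lemma norm_jacobiTheta₂_ofReal_le (x : ℝ) {τ : ℂ} (hτ : 0 < τ.im) :
    ‖jacobiTheta₂ x τ‖ ≤
      1 / √‖τ‖ * ∑' m : ℤ, Real.exp (-(π * τ.im / ‖τ‖ ^ 2) * (x + m) ^ 2) := by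
  have hτ₀ : τ ≠ 0 := by
    rintro rfl
    exact hτ.ne' Complex.zero_im
  have hterm (m : ℤ) : ‖Complex.exp (-π * Complex.I * ((x : ℂ) + m) ^ 2 / τ)‖ =
      Real.exp (-(π * τ.im / ‖τ‖ ^ 2) * (x + m) ^ 2) := by
    exact_mod_cast norm_cexp_neg_pi_mul_I_mul_sq_div (x + m) τ
  have hsummable := summable_exp_neg_mul_sq_add_intCast (c := π * τ.im / ‖τ‖ ^ 2) (by positivity) x
  have hfactor : ‖1 / (-Complex.I * τ) ^ (1 / 2 : ℂ)‖ = 1 / √‖τ‖ := by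
    rw [show (1 / 2 : ℂ) = ((1 / 2 : ℝ) : ℂ) by norm_num, norm_div, norm_one,
      Complex.norm_cpow_real, ← Real.sqrt_eq_rpow, norm_mul, norm_neg, Complex.norm_I, one_mul]
  rw [jacobiTheta₂_eq_tsum_exp _ hτ₀, norm_mul, hfactor]
  gcongr
  exact tsum_of_norm_bounded hsummable.hasSum fun m ↦ (hterm m).le

section ResidueClasses

variable {q : ℕ} [NeZero q]

lemma sum_zmod_tsum_val_add_mul {f : ℤ → ℝ} (hf : Summable f) :
    ∑ k : ZMod q, ∑' m : ℤ, f (k.val + m * q) = ∑' l, f l := by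
  have hf' : Summable fun p : Fin q × ℤ ↦ f (p.2 * q + (p.1 : ℕ)) :=
    ((Int.divModEquiv q).symm.summable_iff.2 hf).prod_symm
  have hval (k : Fin q) : (ZMod.finEquiv q k).val = k := by
    cases q with
    | zero => exact k.elim0
    | succ => rfl
  calc ∑ k : ZMod q, ∑' m : ℤ, f (k.val + m * q)
      = ∑ k : Fin q, ∑' m : ℤ, f (m * q + (k : ℕ)) := by
        rw [← (ZMod.finEquiv q).toEquiv.sum_comp]
        simp_rw [RingEquiv.toEquiv_eq_coe, EquivLike.coe_coe, hval, add_comm]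
    _ = ∑' l, f l := by
      rw [← tsum_fintype (L := .unconditional _), ← hf'.tsum_prod,
        ← (Int.divModEquiv q).symm.tsum_eq, ← (Equiv.prodComm (Fin q) ℤ).tsum_eq]
      rfl

lemma jacobiTheta₂_term_add_val_div (k : ZMod q) (n : ℤ) (z τ : ℂ) :
    jacobiTheta₂_term n (z + k.val / q) τ =
      ZMod.stdAddChar (k * (n : ZMod q)) * jacobiTheta₂_term n z τ := by
  have hchar : (ZMod.stdAddChar (k * (n : ZMod q)) : ℂ) =
      Complex.exp (2 * π * Complex.I * (k.val * n) / q) := by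
    have := ZMod.stdAddChar_coe (N := q) (k.val * n)
    push_cast [ZMod.natCast_zmod_val] at this
    exact this
  rw [hchar, jacobiTheta₂_term, jacobiTheta₂_term, ← Complex.exp_add]
  ring_nf

/-- Fourier inversion on `ZMod q` turns periodic weights into translations of the theta series. -/
lemma tsum_mul_jacobiTheta₂_term_eq (Φ : ZMod q → ℂ) (z : ℂ) {τ : ℂ} (hτ : 0 < τ.im) :
    ∑' n : ℤ, Φ n * jacobiTheta₂_term n z τ =
      (q : ℂ)⁻¹ * ∑ k : ZMod q, ZMod.dft Φ k * jacobiTheta₂ (z + k.val / q) τ := by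
  have hinversion (n : ℤ) :
      Φ n = (q : ℂ)⁻¹ * ∑ k : ZMod q, ZMod.stdAddChar (k * (n : ZMod q)) * ZMod.dft Φ k := by
    simpa only [LinearEquiv.symm_apply_apply, smul_eq_mul] using ZMod.invDFT_apply (ZMod.dft Φ) n
  have hsummable (k : ZMod q) :
      Summable fun n : ℤ ↦ ZMod.dft Φ k * jacobiTheta₂_term n (z + k.val / q) τ :=
    ((summable_jacobiTheta₂_term_iff _ _).2 hτ).mul_left _
  simp_rw [jacobiTheta₂, ← tsum_mul_left]
  rw [← Summable.tsum_finsetSum fun k _ ↦ hsummable k, ← tsum_mul_left]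
  refine tsum_congr fun n ↦ ?_
  rw [hinversion, mul_assoc, Finset.sum_mul]
  congr 1
  refine Finset.sum_congr rfl fun k _ ↦ ?_
  rw [jacobiTheta₂_term_add_val_div]
  ring

lemma norm_tsum_mul_jacobiTheta₂_term_le {Φ : ZMod q → ℂ} {M : ℝ}
    (hΦ : ∀ k, ‖ZMod.dft Φ k‖ ≤ M) (x : ℝ) {τ : ℂ} (hτ : 0 < τ.im) :
    ‖∑' n : ℤ, Φ n * jacobiTheta₂_term n x τ‖ ≤ M / (q * √‖τ‖) *
      ∑' l : ℤ, Real.exp (-(π * τ.im / ‖τ‖ ^ 2) * (x + l / q) ^ 2) := by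
  have hq : (0 : ℝ) < q := Nat.cast_pos.2 (NeZero.pos q)
  have hM : 0 ≤ M := (norm_nonneg _).trans (hΦ 0)
  have hτ₀ : 0 < ‖τ‖ := hτ.trans_le ((le_abs_self _).trans (Complex.abs_im_le_norm τ))
  set A := π * τ.im / ‖τ‖ ^ 2
  have hsummable : Summable fun l : ℤ ↦ Real.exp (-A * (x + l / q) ^ 2) := by
    refine (summable_exp_neg_mul_sq_add_intCast (c := A / q ^ 2) (by positivity) (x * q)).congr
      fun l ↦ ?_
    congr 1
    field_simp
  have htheta (k : ZMod q) : ‖jacobiTheta₂ (x + k.val / q) τ‖ ≤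
      1 / √‖τ‖ * ∑' m : ℤ, Real.exp (-A * (x + ((k.val + m * q : ℤ) : ℝ) / q) ^ 2) := by
    have hx (m : ℤ) : x + ((k.val + m * q : ℤ) : ℝ) / q = (x + k.val / q : ℝ) + m := by
      push_cast
      field_simp
      ring
    simp_rw [hx]
    have := norm_jacobiTheta₂_ofReal_le (x + k.val / q) hτ
    push_cast at this
    exact this
  calc ‖∑' n : ℤ, Φ n * jacobiTheta₂_term n x τ‖
      ≤ (q : ℝ)⁻¹ * ∑ k : ZMod q, ‖ZMod.dft Φ k * jacobiTheta₂ (x + k.val / q) τ‖ := by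
        rw [tsum_mul_jacobiTheta₂_term_eq Φ x hτ, norm_mul, norm_inv, Complex.norm_natCast]
        gcongr
        exact norm_sum_le _ _
    _ ≤ (q : ℝ)⁻¹ * ∑ k : ZMod q, M * (1 / √‖τ‖ *
          ∑' m : ℤ, Real.exp (-A * (x + ((k.val + m * q : ℤ) : ℝ) / q) ^ 2)) := by
        gcongr with k
        rw [norm_mul]
        gcongr
        exacts [hΦ k, htheta k]
    _ = M / (q * √‖τ‖) * ∑' l : ℤ, Real.exp (-A * (x + l / q) ^ 2) := by
        rw [← Finset.mul_sum, ← Finset.mul_sum, sum_zmod_tsum_val_add_mul hsummable]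
        field_simp

end ResidueClasses

lemma jacobiTheta₂_two_mul_natCast_div_add (q : ℕ) [NeZero q] (a : ℕ) (z w : ℂ) :
    jacobiTheta₂ z (2 * (a / q + w)) = ∑' n : ℤ,
      (ZMod.stdAddChar ((a : ZMod q) * (n : ZMod q) ^ 2) : ℂ) * jacobiTheta₂_term n z (2 * w) := by
  refine tsum_congr fun n ↦ ?_
  have hchar : (ZMod.stdAddChar ((a : ZMod q) * (n : ZMod q) ^ 2) : ℂ) =
      Complex.exp (2 * π * Complex.I * (a * n ^ 2) / q) := by
    have := ZMod.stdAddChar_coe (N := q) (a * n ^ 2)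
    push_cast at this
    exact this
  rw [hchar, jacobiTheta₂_term, jacobiTheta₂_term, ← Complex.exp_add]
  ring_nf

/-- Half of the exponent is spent on the decay in `δ`, the other half keeps the series bounded. -/
lemma tsum_exp_neg_two_mul_mul_sq_le {c₀ A q δ x : ℝ} (hc₀ : 0 < c₀) (hq : 0 < q)
    (hA : c₀ * q ^ 2 ≤ A) (hδ : 0 ≤ δ) (hx : ∀ l : ℤ, δ ≤ |x + l / q|) :
    ∑' l : ℤ, Real.exp (-(2 * A) * (x + l / q) ^ 2) ≤
      Real.exp c₀ * (∑' l : ℤ, Real.exp (-(c₀ / 2) * (0 + l) ^ 2)) * Real.exp (-(A * δ ^ 2)) := by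
  have hA₀ : 0 < A := (by positivity : 0 < c₀ * q ^ 2).trans_le hA
  have hc : c₀ ≤ A / q ^ 2 := (le_div_iff₀ (by positivity)).2 hA
  have hrescale (l : ℤ) : -(A / q ^ 2) * (x * q + l) ^ 2 = -A * (x + l / q) ^ 2 := by
    field_simp
  have hsummable := summable_exp_neg_mul_sq_add_intCast (hc₀.trans_le hc) (x * q)
  have hbound := tsum_exp_neg_mul_sq_add_intCast_le hc₀ hc (x * q)
  simp_rw [hrescale] at hsummable hbound
  have hterm (l : ℤ) : Real.exp (-(2 * A) * (x + l / q) ^ 2) ≤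
      Real.exp (-A * (x + l / q) ^ 2) * Real.exp (-(A * δ ^ 2)) := by
    have hsq : δ ^ 2 ≤ (x + l / q) ^ 2 := by
      rw [← sq_abs (x + l / q)]
      gcongr
      exact hx l
    rw [← Real.exp_add, Real.exp_le_exp]
    linarith [mul_le_mul_of_nonneg_left hsq hA₀.le]
  calc ∑' l : ℤ, Real.exp (-(2 * A) * (x + l / q) ^ 2)
      ≤ (∑' l : ℤ, Real.exp (-A * (x + l / q) ^ 2)) * Real.exp (-(A * δ ^ 2)) := by
        have hmajorant := hsummable.mul_right (Real.exp (-(A * δ ^ 2)))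
        rw [← tsum_mul_right]
        exact Summable.tsum_le_tsum hterm
          (hmajorant.of_nonneg_of_le (fun _ ↦ Real.exp_nonneg _) hterm) hmajorant
    _ ≤ _ := by gcongr

lemma exists_norm_jacobiTheta₂_near_rational_le {c : ℝ} (hc : 0 < c) :
    ∃ K : ℝ, 0 ≤ K ∧ ∀ {q : ℕ} [NeZero q] {a : ℕ}, a.Coprime q → ∀ {w : ℂ}, 0 < w.im →
      c * (q * ‖w‖) ^ 2 ≤ w.im → ∀ {x δ : ℝ}, 0 ≤ δ → (∀ l : ℤ, δ ≤ |x + l / q|) →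
        ‖jacobiTheta₂ x (2 * (a / q + w))‖ ≤
          K / √(q * ‖w‖) * Real.exp (-(π / 4 * δ ^ 2 * w.im / ‖w‖ ^ 2)) := by
  have hc₀ : 0 < π * c / 4 := by positivity
  refine ⟨Real.exp (π * c / 4) * ∑' l : ℤ, Real.exp (-(π * c / 4 / 2) * (0 + l) ^ 2),
    mul_nonneg (Real.exp_nonneg _) (tsum_nonneg fun _ ↦ Real.exp_nonneg _),
    fun {q} _ {a} ha {w} hw hqw {x δ} hδ hx ↦ ?_⟩
  have hq : (0 : ℝ) < q := Nat.cast_pos.2 (NeZero.pos q)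
  have hw₀ : 0 < ‖w‖ := hw.trans_le ((le_abs_self _).trans (Complex.abs_im_le_norm w))
  have hunit : IsUnit (a : ZMod q) := (ZMod.isUnit_iff_coprime a q).2 ha
  have him : (2 * w).im = 2 * w.im := by
    rw [← Complex.ofReal_ofNat, Complex.im_ofReal_mul]
  have hnorm : ‖2 * w‖ = 2 * ‖w‖ := by rw [norm_mul, Complex.norm_ofNat]
  have hprefactor : √(2 * q) / (q * √(2 * ‖w‖)) = 1 / √(q * ‖w‖) := by
    rw [Real.sqrt_mul zero_le_two, Real.sqrt_mul zero_le_two, Real.sqrt_mul hq.le]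
    field_simp
    exact Real.sq_sqrt hq.le
  have hexponent : π * (2 * w).im / ‖2 * w‖ ^ 2 = 2 * (π * w.im / (4 * ‖w‖ ^ 2)) := by
    rw [him, hnorm]
    field_simp
    ring
  have hA : π * c / 4 * q ^ 2 ≤ π * w.im / (4 * ‖w‖ ^ 2) := by
    rw [le_div_iff₀ (by positivity)]
    linarith [mul_le_mul_of_nonneg_left hqw Real.pi_pos.le]
  have hweighted := norm_tsum_mul_jacobiTheta₂_term_le (norm_dft_quadratic_le hunit) x
    (τ := 2 * w) (by rw [him]; positivity)
  have hdecay := tsum_exp_neg_two_mul_mul_sq_le hc₀ hq hA hδ hx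
  rw [← jacobiTheta₂_two_mul_natCast_div_add, hexponent, hnorm, hprefactor] at hweighted
  refine (hweighted.trans (mul_le_mul_of_nonneg_left hdecay (by positivity))).trans_eq ?_
  rw [← mul_assoc, one_div_mul_eq_div]
  congr 3
  field_simp

/-! ### The transform off `Ω_{j,k}` -/

section PiProd

variable {β R : Type*} [NormedCommRing R]

lemma prod_consEquiv {d : ℕ} (f : Fin (d + 1) → β → R) (p : β × (Fin d → β)) :
    ∏ i, f i (Fin.consEquiv (fun _ ↦ β) p i) = f 0 p.1 * ∏ i : Fin d, f i.succ (p.2 i) := by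
  simp only [Fin.consEquiv, Equiv.coe_fn_mk, Fin.prod_univ_succ, Fin.cons_zero, Fin.cons_succ]

lemma summable_norm_pi_prod {d : ℕ} {f : Fin d → β → R} (hf : ∀ i, Summable fun n ↦ ‖f i n‖) :
    Summable fun m : Fin d → β ↦ ‖∏ i, f i (m i)‖ := by
  induction d with
  | zero => exact .of_finite
  | succ d ih =>
    rw [← (Fin.consEquiv fun _ ↦ β).summable_iff]
    refine ((hf 0).mul_norm (ih fun i ↦ hf i.succ)).congr fun p ↦ ?_
    rw [Function.comp_apply, prod_consEquiv]

lemma tsum_pi_prod [CompleteSpace R] {d : ℕ} {f : Fin d → β → R}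
    (hf : ∀ i, Summable fun n ↦ ‖f i n‖) :
    ∑' m : Fin d → β, ∏ i, f i (m i) = ∏ i, ∑' n, f i n := by
  induction d with
  | zero => simp only [tsum_fintype, Finset.univ_eq_empty, Finset.prod_empty, Finset.sum_const,
      Finset.card_univ, Fintype.card_unique, one_smul]
  | succ d ih =>
    rw [← (Fin.consEquiv fun _ ↦ β).tsum_eq]
    simp_rw [prod_consEquiv]
    rw [Fin.prod_univ_succ, ← ih fun i ↦ hf i.succ,
      tsum_mul_tsum_of_summable_norm (hf 0) (summable_norm_pi_prod fun i ↦ hf i.succ)]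

end PiProd

lemma sHat_eq_prod_jacobiTheta₂ {d : ℕ} {ε : ℝ} (hε : 0 < ε) (t : ℝ) (α : Fin d → ℝ) :
    sHat ε t α = ∏ i, jacobiTheta₂ (α i) (2 * (t + Complex.I * ε)) := by
  have hsummable (i : Fin d) : Summable fun n : ℤ ↦
      ‖jacobiTheta₂_term n (-(α i : ℂ)) (2 * (t + Complex.I * ε))‖ := by
    rw [summable_norm_iff, summable_jacobiTheta₂_term_iff]
    simpa using hε
  calc sHat ε t α
      = ∑' m : Fin d → ℤ,
          ∏ i, jacobiTheta₂_term (m i) (-(α i : ℂ)) (2 * (t + Complex.I * ε)) := by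
        refine tsum_congr fun m ↦ ?_
        simp only [sFun, nsq, jacobiTheta₂_term]
        rw [← Complex.exp_add, ← Complex.exp_sum]
        congr 1
        push_cast
        simp only [Finset.mul_sum, Finset.sum_mul, ← Finset.sum_add_distrib]
        refine Finset.sum_congr rfl fun i _ ↦ ?_
        ring
    _ = ∏ i, jacobiTheta₂ (α i) (2 * (t + Complex.I * ε)) := by
        rw [tsum_pi_prod hsummable]
        exact Finset.prod_congr rfl fun i _ ↦ jacobiTheta₂_neg_left _ _

lemma qlcm_eq_lcmUpto (j : ℕ) : qlcm j = Nat.lcmUpto (2 ^ j) := rfl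

lemma qlcm_pos (j : ℕ) : 0 < qlcm j := Nat.lcmUpto_pos _

lemma exists_forall_lt_abs_add_div_of_notMem_OmegaJK {d j k q : ℕ} (hq : q ∣ qlcm j)
    {α : Fin d → ℝ} (hα : α ∉ OmegaJK d j k) :
    ∃ i, ∀ l : ℤ, (2 : ℝ) ^ ((j : ℤ) - (k : ℤ)) < |α i + l / q| := by
  by_contra! h
  choose l hl using h
  obtain ⟨c, hc⟩ := hq
  have hc₀ : (c : ℝ) ≠ 0 := by
    refine Nat.cast_ne_zero.2 fun h₀ ↦ (qlcm_pos j).ne' ?_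
    rw [hc, h₀, mul_zero]
  refine hα ⟨fun i ↦ -l i * c, fun i ↦ le_of_eq_of_le ?_ (hl i)⟩
  rw [hc]
  push_cast
  rw [mul_div_mul_right _ _ hc₀, neg_div, sub_neg_eq_add]

lemma exists_norm_sHat_le_of_separated (d : ℕ) {c : ℝ} (hc : 0 < c) :
    ∃ K : ℝ, 0 ≤ K ∧ ∀ {q : ℕ} [NeZero q] {a : ℕ}, a.Coprime q → ∀ {w : ℂ}, 0 < w.im →
      c * (q * ‖w‖) ^ 2 ≤ w.im → ∀ {α : Fin d → ℝ} {δ : ℝ}, 0 ≤ δ →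
        (∃ i, ∀ l : ℤ, δ ≤ |α i + l / q|) → ‖sHat w.im (a / q + w.re) α‖ ≤
          (K / √(q * ‖w‖)) ^ d * Real.exp (-(π / 4 * δ ^ 2 * w.im / ‖w‖ ^ 2)) := by
  obtain ⟨K, hK, htheta⟩ := exists_norm_jacobiTheta₂_near_rational_le hc
  refine ⟨K, hK, fun {q} _ {a} ha {w} hw hqw {α} {δ} hδ ⟨i₀, hi₀⟩ ↦ ?_⟩
  set E := Real.exp (-(π / 4 * δ ^ 2 * w.im / ‖w‖ ^ 2))
  have hpoint : ((a / q + w.re : ℝ) : ℂ) + Complex.I * (w.im : ℂ) = a / q + w := by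
    conv_rhs => rw [← Complex.re_add_im w]
    push_cast
    ring
  rw [sHat_eq_prod_jacobiTheta₂ hw, hpoint, norm_prod]
  calc ∏ i, ‖jacobiTheta₂ (α i) (2 * (a / q + w))‖
      ≤ ∏ i, K / √(q * ‖w‖) * if i = i₀ then E else 1 := by
        refine Finset.prod_le_prod (fun _ _ ↦ norm_nonneg _) fun i _ ↦ ?_
        split_ifs with hi
        · exact htheta ha hw hqw hδ (hi ▸ hi₀)
        · have := htheta ha hw hqw (x := α i) le_rfl fun _ ↦ abs_nonneg _
          rwa [zero_pow two_ne_zero, mul_zero, zero_mul, zero_div, neg_zero, Real.exp_zero] at this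
    _ = (K / √(q * ‖w‖)) ^ d * E := by
        rw [Finset.prod_mul_distrib, Finset.prod_const, Finset.prod_ite_eq', Finset.card_univ,
          Fintype.card_fin, if_pos (Finset.mem_univ _)]

lemma rpow_neg_mul_exp_neg_le {p D X b : ℝ} (hp : 0 ≤ p) (hD : 1 ≤ D) (hX : 0 < X)
    (hb : 0 ≤ b) :
    X ^ (-p) * Real.exp (-(p / D * (b / X))) ≤ D ^ p * (X + b) ^ (-p) := by
  have hD₀ : 0 < D := one_pos.trans_le hD
  calc X ^ (-p) * Real.exp (-(p / D * (b / X)))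
      = X ^ (-p) * Real.exp (b / X / D) ^ (-p) := by
        rw [← Real.exp_mul]
        ring_nf
    _ ≤ X ^ (-p) * ((X + b) / X / D) ^ (-p) := by
        gcongr X ^ (-p) * ?_
        refine Real.rpow_le_rpow_of_nonpos (by positivity) ?_ (neg_nonpos.2 hp)
        calc (X + b) / X / D = 1 / D + b / X / D := by field_simp
          _ ≤ b / X / D + 1 := by
            rw [add_comm]
            gcongr
            exact (div_le_one hD₀).2 hD
          _ ≤ Real.exp (b / X / D) := Real.add_one_le_exp _
    _ = D ^ p * (X + b) ^ (-p) := by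
        rw [Real.div_rpow (by positivity) hD₀.le, Real.div_rpow (by positivity) hX.le,
          Real.rpow_neg hD₀.le]
        field_simp

lemma div_sqrt_mul_sqrt_pow (K : ℝ) {q X : ℝ} (hq : 0 ≤ q) (hX : 0 ≤ X) (d : ℕ) :
    (K / √(q * √X)) ^ d = K ^ d * q ^ (-(d : ℝ) / 2) * X ^ (-((d : ℝ) / 4)) := by
  have hpow {y : ℝ} (hy : 0 ≤ y) : √y ^ d = y ^ ((d : ℝ) / 2) := by
    rw [Real.sqrt_eq_rpow, ← Real.rpow_mul_natCast hy]
    ring_nf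
  rw [div_pow, hpow (by positivity), Real.mul_rpow hq (Real.sqrt_nonneg X), Real.sqrt_eq_rpow,
    ← Real.rpow_mul hX, neg_div, Real.rpow_neg hq, Real.rpow_neg hX, div_eq_mul_inv, mul_inv,
    mul_assoc]
  ring_nf

lemma sq_add_sq_rpow_neg_mul_exp_le {d : ℕ} (hd : 0 < d) (τ : ℝ) {s ε : ℝ} (hs : 0 < s)
    (hε : 0 < ε) :
    (τ ^ 2 + ε ^ 2) ^ (-((d : ℝ) / 4)) * Real.exp (-(π / 4 * s ^ 2 / (τ ^ 2 + ε ^ 2))) ≤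
      d ^ ((d : ℝ) / 4) * (τ ^ 2 + s ^ 2) ^ (-((d : ℝ) / 4)) := by
  have hd₁ : (1 : ℝ) ≤ d := Nat.one_le_cast.2 hd
  set X := τ ^ 2 + ε ^ 2
  have hX : 0 < X := by positivity
  calc X ^ (-((d : ℝ) / 4)) * Real.exp (-(π / 4 * s ^ 2 / X))
      ≤ X ^ (-((d : ℝ) / 4)) * Real.exp (-((d : ℝ) / 4 / d * (s ^ 2 / X))) := by
        rw [div_right_comm, div_self (by positivity), mul_div_assoc]
        gcongr
        linarith [Real.pi_gt_three]
    _ ≤ d ^ ((d : ℝ) / 4) * (X + s ^ 2) ^ (-((d : ℝ) / 4)) :=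
        rpow_neg_mul_exp_neg_le (by positivity) hd₁ hX (sq_nonneg s)
    _ ≤ d ^ ((d : ℝ) / 4) * (τ ^ 2 + s ^ 2) ^ (-((d : ℝ) / 4)) := by
        gcongr _ * ?_
        refine Real.rpow_le_rpow_of_nonpos (by positivity) ?_ (neg_nonpos.2 (by positivity))
        linarith [sq_nonneg ε]

/-- The Gaussian decay in a single coordinate smooths the singularity at `a / q` on the scale
`2 ^ j * ε` instead of `ε`. -/
lemma exists_norm_sHat_le_of_notMem_OmegaJK (d : ℕ) :
    ∃ K : ℝ, 0 ≤ K ∧ ∀ {j k q : ℕ} [NeZero q], q ∣ qlcm j → ∀ {a : ℕ}, a.Coprime q →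
      ∀ {ε τ : ℝ}, ε = ((2 : ℝ) ^ (2 * k))⁻¹ → q ^ 2 * (τ ^ 2 + ε ^ 2) ≤ 2 * ε →
        ∀ {α : Fin d → ℝ}, α ∉ OmegaJK d j k → ‖sHat ε (a / q + τ) α‖ ≤
          K * q ^ (-(d : ℝ) / 2) * (τ ^ 2 + (2 ^ j * ε) ^ 2) ^ (-((d : ℝ) / 4)) := by
  obtain ⟨K, hK, hbound⟩ := exists_norm_sHat_le_of_separated d (c := 1 / 2) (by positivity)
  refine ⟨K ^ d * d ^ ((d : ℝ) / 4), by positivity,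
    fun {j k q} _ hq {a} ha {ε τ} hε hτ {α} hα ↦ ?_⟩
  obtain ⟨i₀, hi₀⟩ := exists_forall_lt_abs_add_div_of_notMem_OmegaJK hq hα
  have hε₀ : 0 < ε := by rw [hε]; positivity
  have hnorm : ‖(⟨τ, ε⟩ : ℂ)‖ = √(τ ^ 2 + ε ^ 2) := Complex.norm_eq_sqrt_sq_add_sq _
  have hX : 0 ≤ τ ^ 2 + ε ^ 2 := by positivity
  have hscale : ((2 : ℝ) ^ ((j : ℤ) - (k : ℤ))) ^ 2 * ε = (2 ^ j * ε) ^ 2 := by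
    rw [zpow_sub₀ two_ne_zero, hε, zpow_natCast, zpow_natCast]
    field_simp
    ring
  have hseparated := hbound ha (w := ⟨τ, ε⟩) hε₀ (by
    rw [hnorm, mul_pow, Real.sq_sqrt hX]
    linarith) (α := α) (by positivity) ⟨i₀, fun l ↦ (hi₀ l).le⟩
  rw [hnorm, Real.sq_sqrt hX, div_sqrt_mul_sqrt_pow K q.cast_nonneg hX,
    mul_assoc (π / 4), hscale, mul_assoc] at hseparated
  calc ‖sHat ε (a / q + τ) α‖ ≤ K ^ d * q ^ (-(d : ℝ) / 2) * _ := hseparated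
    _ ≤ K ^ d * q ^ (-(d : ℝ) / 2) *
        (d ^ ((d : ℝ) / 4) * (τ ^ 2 + (2 ^ j * ε) ^ 2) ^ (-((d : ℝ) / 4))) := by
        gcongr _ * ?_
        exact sq_add_sq_rpow_neg_mul_exp_le i₀.pos τ (by positivity) hε₀
    _ = _ := by ring

/-! ### Integration over a Farey arc -/

lemma sq_add_sq_rpow_neg_eq {s : ℝ} (hs : 0 < s) (p τ : ℝ) :
    (τ ^ 2 + s ^ 2) ^ (-p) = s ^ (-(2 * p)) * (1 + ‖τ / s‖ ^ 2) ^ (-(2 * p) / 2) := by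
  have hfactor : τ ^ 2 + s ^ 2 = s ^ 2 * (1 + (τ / s) ^ 2) := by
    field_simp
    ring
  rw [hfactor, Real.norm_eq_abs, sq_abs, Real.mul_rpow (by positivity) (by positivity),
    ← Real.rpow_natCast_mul hs.le]
  ring_nf

lemma integrable_one_add_norm_sq_rpow_neg {p : ℝ} (hp : 1 < 2 * p) :
    MeasureTheory.Integrable fun u : ℝ ↦ (1 + ‖u‖ ^ 2) ^ (-(2 * p) / 2) :=
  integrable_rpow_neg_one_add_norm_sq (by simpa only [Module.finrank_self, Nat.cast_one] using hp)

lemma integrable_sq_add_sq_rpow_neg {p s : ℝ} (hp : 1 < 2 * p) (hs : 0 < s) :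
    MeasureTheory.Integrable fun τ : ℝ ↦ (τ ^ 2 + s ^ 2) ^ (-p) := by
  simp_rw [sq_add_sq_rpow_neg_eq hs p]
  exact ((integrable_one_add_norm_sq_rpow_neg hp).comp_div hs.ne').const_mul _

lemma integral_sq_add_sq_rpow_neg (p : ℝ) {s : ℝ} (hs : 0 < s) :
    ∫ τ : ℝ, (τ ^ 2 + s ^ 2) ^ (-p) =
      s ^ (1 - 2 * p) * ∫ u : ℝ, (1 + ‖u‖ ^ 2) ^ (-(2 * p) / 2) := by
  simp_rw [sq_add_sq_rpow_neg_eq hs p]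
  rw [MeasureTheory.integral_const_mul,
    MeasureTheory.Measure.integral_comp_div (fun u : ℝ ↦ (1 + ‖u‖ ^ 2) ^ (-(2 * p) / 2)) s,
    abs_of_pos hs, smul_eq_mul, sub_eq_add_neg, Real.rpow_add hs, Real.rpow_one]
  ring

lemma one_le_abs_ratCast_sub_mul_den {x y : ℚ} (hxy : x ≠ y) :
    (1 : ℝ) ≤ |(x : ℝ) - y| * (x.den * y.den) := by
  have hx : (0 : ℚ) < x.den := Nat.cast_pos.2 x.pos
  have hy : (0 : ℚ) < y.den := Nat.cast_pos.2 y.pos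
  have hnum : (x - y) * (x.den * y.den) = (x.num * y.den - y.num * x.den : ℤ) := by
    push_cast
    rw [← Rat.mul_den_eq_num x, ← Rat.mul_den_eq_num y]
    ring
  have hne : x.num * y.den - y.num * x.den ≠ 0 := by
    rw [← Int.cast_ne_zero (α := ℚ), ← hnum]
    exact mul_ne_zero (sub_ne_zero.2 hxy) (by positivity)
  have : (1 : ℚ) ≤ |x - y| * (x.den * y.den) := by
    rw [← abs_of_pos (mul_pos hx hy), ← abs_mul, hnum]
    exact_mod_cast Int.one_le_abs hne
  exact_mod_cast this

section Farey

variable {k a q : ℕ} {t : ℝ}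

lemma measurableSet_FareyArc (k a q : ℕ) : MeasurableSet (FareyArc k a q) := by
  have hinfDist : FareyArc k a q =
      Set.Icc 0 1 ∩ {t : ℝ | |t - (a : ℝ) / q| = Metric.infDist t (FareyH k)} := by
    ext t
    simp only [FareyArc, Set.mem_ofPred_eq, Set.mem_inter_iff, Metric.infDist_eq_iInf,
      Real.dist_eq]
  rw [hinfDist]
  exact measurableSet_Icc.inter
    (isClosed_eq (by fun_prop) (Metric.continuous_infDist_pt _)).measurableSet

lemma abs_sub_le_of_mem_FareyArc {r : ℝ} (ht : t ∈ FareyArc k a q) (hr : r ∈ FareyH k) :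
    |t - (a : ℝ) / q| ≤ |t - r| := by
  rw [ht.2]
  exact ciInf_le ⟨0, Set.forall_mem_range.2 fun _ ↦ abs_nonneg _⟩ (⟨r, hr⟩ : FareyH k)

lemma ratCast_mem_FareyH {x : ℚ} (hx₀ : 0 < x) (hx₁ : x ≤ 1) (hden : x.den ≤ 2 ^ k) :
    (x : ℝ) ∈ FareyH k := by
  have hnum : 0 < x.num := Rat.num_pos.2 hx₀
  have hle : x.num ≤ x.den := by
    rw [Rat.le_iff] at hx₁
    simpa using hx₁
  refine ⟨x.num.natAbs, x.den, x.pos, hden, by lia, by lia, x.reduced, ?_⟩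
  conv_lhs => rw [Rat.cast_def, ← Int.natAbs_of_nonneg hnum.le]
  rw [Int.cast_natCast]

lemma one_div_two_pow_lt_of_mem_FareyArc (hq : 0 < q) (hqk : q < 2 ^ k) (ha : 0 < a)
    (ht : t ∈ FareyArc k a q) : 1 / 2 ^ k < t := by
  have hcenter : 1 / (2 : ℝ) ^ k < a / q := by
    have hq₀ : (0 : ℝ) < q := Nat.cast_pos.2 hq
    calc 1 / (2 : ℝ) ^ k < 1 / q := one_div_lt_one_div_of_lt hq₀ (mod_cast hqk)
      _ ≤ a / q := by
        gcongr
        exact Nat.one_le_cast.2 ha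
  have hmem : 1 / (2 : ℝ) ^ k ∈ FareyH k :=
    ⟨1, 2 ^ k, Nat.one_le_two_pow, le_rfl, one_pos, Nat.one_le_two_pow, Nat.coprime_one_left _,
      by push_cast; rfl⟩
  by_contra! hle
  have hnear := abs_sub_le_of_mem_FareyArc ht hmem
  rw [abs_of_nonpos (by linarith), abs_of_nonpos (by linarith)] at hnear
  linarith

/-- Dirichlet's approximation theorem; for `t ≤ 1 / 2 ^ k` it may only provide `0 ∉ FareyH k`. -/
lemma exists_ratCast_mem_FareyH_abs_sub_le (ht₀ : 1 / 2 ^ k < t) (ht₁ : t ≤ 1) :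
    ∃ x : ℚ, (x : ℝ) ∈ FareyH k ∧ |t - x| * ((2 ^ k + 1) * x.den) ≤ 1 := by
  obtain ⟨x, happrox, hden⟩ := Real.exists_rat_abs_sub_le_and_den_le t (n := 2 ^ k) (by positivity)
  have hden₁ : (1 : ℝ) ≤ x.den := Nat.one_le_cast.2 x.pos
  rw [le_div_iff₀ (by positivity)] at happrox
  push_cast at happrox
  refine ⟨x, ratCast_mem_FareyH ?_ ?_ hden, happrox⟩
  · by_contra! hx
    have hx : (x : ℝ) ≤ 0 := mod_cast hx
    rw [div_lt_iff₀ (by positivity)] at ht₀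
    have : t * 2 ^ k ≤ |t - x| * ((2 ^ k + 1) * x.den) := by
      gcongr
      · exact (le_sub_self_iff _).2 hx |>.trans (le_abs_self _)
      · exact (le_add_of_nonneg_right zero_le_one).trans
          (le_mul_of_one_le_right (by positivity) hden₁)
    linarith
  · by_contra! hx
    have hx₁ : 0 < (x : ℝ) - 1 := sub_pos.2 (mod_cast hx)
    have hgap := one_le_abs_ratCast_sub_mul_den hx.ne'
    rw [Rat.cast_one, Rat.den_one, Nat.cast_one, mul_one, abs_of_pos hx₁] at hgap
    have : 1 < |t - x| * ((2 ^ k + 1) * x.den) :=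
      calc (1 : ℝ) ≤ (x - 1) * x.den := hgap
        _ < (x - 1) * ((2 ^ k + 1) * x.den) := by
          gcongr _ * ?_
          exact lt_mul_of_one_lt_left (by positivity) (lt_add_of_pos_left 1 (by positivity))
        _ ≤ |t - x| * ((2 ^ k + 1) * x.den) := by
          gcongr
          rw [abs_sub_comm]
          linarith [le_abs_self (x - t)]
    linarith

/-- The Farey fraction that Dirichlet's theorem attaches to `t` can only be `a / q`: any other one
is too far from `a / q` to be compatible with `t` lying in its arc. -/
lemma abs_sub_mul_le_one_of_mem_FareyArc (hq : 0 < q) (hqk : 2 * q ≤ 2 ^ k) (ha : 0 < a)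
    (hcoprime : a.Coprime q) (ht : t ∈ FareyArc k a q) : |t - (a : ℝ) / q| * (q * 2 ^ k) ≤ 1 := by
  obtain ⟨x, hx, hDirichlet⟩ := exists_ratCast_mem_FareyH_abs_sub_le
    (one_div_two_pow_lt_of_mem_FareyArc hq (by lia) ha ht) ht.1.2
  have hden : (((a : ℤ) / (q : ℤ) : ℚ)).den = q := by
    exact Int.natCast_inj.1
      (Rat.den_div_eq_of_coprime (a := a) (b := q) (Nat.cast_pos.2 hq) hcoprime)
  have hcast : (((a : ℤ) / (q : ℤ) : ℚ) : ℝ) = a / q := by push_cast; rfl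
  rcases eq_or_ne x ((a : ℤ) / (q : ℤ)) with rfl | hne
  · rw [hcast, hden] at hDirichlet
    refine le_trans ?_ hDirichlet
    rw [mul_comm (q : ℝ)]
    gcongr
    exact le_add_of_nonneg_right zero_le_one
  · have hgap := one_le_abs_ratCast_sub_mul_den hne
    rw [hcast, hden] at hgap
    have hqk' : 2 * (q : ℝ) ≤ 2 ^ k := mod_cast hqk
    have hnear := abs_sub_le_of_mem_FareyArc ht hx
    have hfar : 1 ≤ |t - x| * x.den * (2 * q) :=
      calc (1 : ℝ) ≤ |x - (a : ℝ) / q| * (x.den * q) := hgap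
        _ ≤ (2 * |t - x|) * (x.den * q) := by
          gcongr
          linarith [abs_sub_le (x : ℝ) t (a / q), abs_sub_comm (x : ℝ) t]
        _ = |t - x| * x.den * (2 * q) := by ring
    have hpos : 0 < |t - x| * x.den := pos_of_mul_pos_left (one_pos.trans_le hfar) (by positivity)
    have : |t - x| * x.den * (2 * q) < |t - x| * x.den * (2 ^ k + 1) := by
      gcongr
      linarith
    linarith

lemma sq_mul_sq_add_sq_le_of_mem_FareyArc (hq : 0 < q) (hqk : 2 * q ≤ 2 ^ k) (ha : 0 < a)
    (hcoprime : a.Coprime q) (ht : t ∈ FareyArc k a q) {ε : ℝ} (hε : ε = ((2 : ℝ) ^ (2 * k))⁻¹) :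
    q ^ 2 * ((t - a / q) ^ 2 + ε ^ 2) ≤ 2 * ε := by
  have hτ : q ^ 2 * (t - a / q) ^ 2 ≤ ε := by
    have hradius := abs_sub_mul_le_one_of_mem_FareyArc hq hqk ha hcoprime ht
    rw [hε, pow_mul', ← one_div, le_div_iff₀ (by positivity)]
    calc (q : ℝ) ^ 2 * (t - a / q) ^ 2 * (2 ^ k) ^ 2 = (|t - a / q| * (q * 2 ^ k)) ^ 2 := by
          rw [mul_pow _ (q * 2 ^ k : ℝ), sq_abs]
          ring
      _ ≤ 1 := pow_le_one₀ (by positivity) hradius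
  have hqε : q ^ 2 * ε ≤ 1 := by
    have hq : (q : ℝ) ≤ 2 ^ k := mod_cast (by lia : q ≤ 2 ^ k)
    rw [hε, mul_inv_le_iff₀ (by positivity), one_mul, pow_mul']
    gcongr
  have hε₀ : 0 ≤ ε := by rw [hε]; positivity
  linarith [mul_le_mul_of_nonneg_right hqε hε₀]

end Farey

lemma two_pow_mul_inv_two_pow_rpow (j k : ℕ) (p : ℝ) :
    ((2 : ℝ) ^ j * ((2 : ℝ) ^ (2 * k))⁻¹) ^ p =
      (((2 : ℝ) ^ (2 * k))⁻¹) ^ p * (2 : ℝ) ^ (j * p) := by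
  rw [Real.mul_rpow (by positivity) (by positivity), Real.rpow_mul zero_le_two, Real.rpow_natCast,
    mul_comm]

lemma exists_integral_FareyArc_iSup_norm_sHat_le {d : ℕ} (hd : 2 < d) :
    ∃ K : ℝ, 0 ≤ K ∧ ∀ {j k q a : ℕ}, q ∣ qlcm j → 2 * q ≤ 2 ^ k → 0 < a → a.Coprime q →
      ∫ t in FareyArc k a q, ⨆ (α : Fin d → ℝ) (_ : α ∉ OmegaJK d j k),
        ‖sHat (((2 : ℝ) ^ (2 * k))⁻¹) t α‖ ≤
          K * q ^ (-(d : ℝ) / 2) * (2 ^ j * ((2 : ℝ) ^ (2 * k))⁻¹) ^ (-((d : ℝ) - 2) / 2) := by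
  obtain ⟨K, hK, hbound⟩ := exists_norm_sHat_le_of_notMem_OmegaJK d
  set p := (d : ℝ) / 4
  have hp : 1 < 2 * p := by
    have : (2 : ℝ) < d := mod_cast hd
    unfold p
    linarith
  refine ⟨K * ∫ u : ℝ, (1 + ‖u‖ ^ 2) ^ (-(2 * p) / 2), by positivity,
    fun {j k q a} hq hqk ha hcoprime ↦ ?_⟩
  have hq₀ : 0 < q := Nat.pos_of_dvd_of_pos hq (qlcm_pos j)
  have : NeZero q := ⟨hq₀.ne'⟩
  obtain ⟨ε, hε⟩ : ∃ ε, ε = ((2 : ℝ) ^ (2 * k))⁻¹ := ⟨_, rfl⟩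
  have hε₀ : 0 < ε := by rw [hε]; positivity
  rw [← hε]
  set s := 2 ^ j * ε
  have hs : 0 < s := by positivity
  set g : ℝ → ℝ := fun τ ↦ K * q ^ (-(d : ℝ) / 2) * (τ ^ 2 + s ^ 2) ^ (-p)
  have hg (τ : ℝ) : 0 ≤ g τ := by positivity
  have hg_int : MeasureTheory.Integrable fun t ↦ g (t - a / q) :=
    ((integrable_sq_add_sq_rpow_neg hp hs).const_mul _).comp_sub_right _
  have hpointwise (t : ℝ) (ht : t ∈ FareyArc k a q) :
      ⨆ (α : Fin d → ℝ) (_ : α ∉ OmegaJK d j k), ‖sHat ε t α‖ ≤ g (t - a / q) := by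
    refine Real.iSup_le (fun α ↦ Real.iSup_le (fun hα ↦ ?_) (hg _)) (hg _)
    have hτ := sq_mul_sq_add_sq_le_of_mem_FareyArc hq₀ hqk ha hcoprime ht hε
    have := hbound hq hcoprime hε hτ hα
    rwa [add_sub_cancel] at this
  calc _ ≤ ∫ t in FareyArc k a q, g (t - a / q) :=
        MeasureTheory.integral_mono_of_nonneg
          (.of_forall fun t ↦ Real.iSup_nonneg fun α ↦ Real.iSup_nonneg fun _ ↦ norm_nonneg _)
          hg_int.integrableOn
          (MeasureTheory.ae_restrict_of_forall_mem (measurableSet_FareyArc k a q) hpointwise)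
    _ ≤ ∫ t, g (t - a / q) :=
        MeasureTheory.setIntegral_le_integral hg_int (.of_forall fun t ↦ hg _)
    _ = _ := by
        rw [MeasureTheory.integral_sub_right_eq_self g, MeasureTheory.integral_const_mul,
          integral_sq_add_sq_rpow_neg p hs, show 1 - 2 * p = -((d : ℝ) - 2) / 2 by ring]
        ring

/-! ### Size of `q_j` and summation over the arcs -/

lemma lcmUpto_two_mul_dvd (n : ℕ) :
    Nat.lcmUpto (2 * n) ∣ Nat.lcmUpto n * Nat.centralBinom n := by
  rcases n.eq_zero_or_pos with rfl | hn
  · exact Nat.dvd_mul_right _ _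
  have hlcm := Nat.lcmUpto_ne_zero n
  have hbinom := Nat.centralBinom_ne_zero n
  rw [← Nat.factorization_prime_le_iff_dvd (Nat.lcmUpto_ne_zero _) (mul_ne_zero hlcm hbinom)]
  intro p hp
  rw [Nat.factorization_mul hlcm hbinom, Finsupp.add_apply, Nat.factorization_lcmUpto _ hp,
    Nat.factorization_lcmUpto _ hp]
  set e := Nat.log p (2 * n)
  rcases le_or_gt e (Nat.log p n) with he | he
  · exact he.trans (Nat.le_add_right _ _)
  have he_succ : e ≤ Nat.log p n + 1 := by
    rw [← Nat.log_mul_base hp.one_lt hn.ne', mul_comm n]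
    exact Nat.log_mono_right (Nat.mul_le_mul_right _ hp.two_le)
  have hlt : n < p ^ e := Nat.lt_pow_of_log_lt hp.one_lt he
  have hle : p ^ e ≤ 2 * n := Nat.pow_log_le_self p (by lia)
  have hcarry : 0 < (Nat.centralBinom n).factorization p := by
    rw [Nat.centralBinom, Nat.factorization_choose (b := e + 1) hp (by lia) (by lia),
      Finset.card_pos]
    refine ⟨e, Finset.mem_filter.2 ⟨Finset.mem_Ico.2 ⟨by lia, by lia⟩, ?_⟩⟩
    rw [show 2 * n - n = n by lia, Nat.mod_eq_of_lt hlt]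
    lia
  lia

lemma lcmUpto_two_mul_le (n : ℕ) : Nat.lcmUpto (2 * n) ≤ Nat.lcmUpto n * 4 ^ n := by
  have hbinom : Nat.centralBinom n ≤ 4 ^ n := by
    rw [show 4 = 2 ^ 2 by rfl, ← pow_mul]
    exact Nat.choose_le_two_pow (2 * n) n
  exact (Nat.le_of_dvd (Nat.mul_pos (Nat.lcmUpto_pos _) (Nat.centralBinom_pos n))
    (lcmUpto_two_mul_dvd n)).trans (Nat.mul_le_mul_left _ hbinom)

lemma qlcm_mul_four_le (j : ℕ) : qlcm j * 4 ≤ 4 ^ (2 ^ j) := by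
  rw [qlcm_eq_lcmUpto]
  induction j with
  | zero => decide
  | succ j ih =>
    calc Nat.lcmUpto (2 ^ (j + 1)) * 4 ≤ Nat.lcmUpto (2 ^ j) * 4 ^ 2 ^ j * 4 := by
          rw [pow_succ']
          gcongr
          exact lcmUpto_two_mul_le _
      _ ≤ 4 ^ 2 ^ j * 4 ^ 2 ^ j := by
          rw [mul_right_comm]
          gcongr
      _ = 4 ^ 2 ^ (j + 1) := by rw [← pow_add, ← two_mul, pow_succ']

lemma two_mul_le_two_pow_of_dvd_qlcm {j k q : ℕ} (hj : (j : ℝ) ≤ Real.logb 2 k - 2)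
    (hq : q ∣ qlcm j) : 2 * q ≤ 2 ^ k := by
  have hk : (0 : ℝ) < k := by
    rcases k.eq_zero_or_pos with rfl | hk
    · rw [Nat.cast_zero, Real.logb_zero] at hj
      linarith [(Nat.cast_nonneg j : (0 : ℝ) ≤ j)]
    · exact Nat.cast_pos.2 hk
  have hjk : 2 ^ (j + 2) ≤ k := by
    have : ((j + 2 : ℕ) : ℝ) ≤ Real.logb 2 k := by
      push_cast
      linarith
    rw [Real.le_logb_iff_rpow_le one_lt_two hk, Real.rpow_natCast] at this
    exact_mod_cast this
  calc 2 * q ≤ qlcm j * 4 := by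
        have := Nat.le_of_dvd (qlcm_pos j) hq
        lia
    _ ≤ 4 ^ 2 ^ j := qlcm_mul_four_le j
    _ = 2 ^ (2 * 2 ^ j) := by rw [pow_mul, show 2 ^ 2 = 4 by rfl]
    _ ≤ 2 ^ k := Nat.pow_le_pow_right two_pos (by lia)

theorem major_arc_estimate_general (d : ℕ) (hd : 5 ≤ d) :
    ∃ C : ℝ, 0 < C ∧ ∀ (k j : ℕ) (Q : Finset ℕ), (∀ q ∈ Q, q ∣ qlcm j ∧ 2 * q ≤ 2 ^ k) →
      (∑ q ∈ Q, ∑ a ∈ (Finset.Icc 1 q).filter (fun a => Nat.Coprime a q),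
          ∫ t in FareyArc k a q,
            ⨆ (α : Fin d → ℝ) (_ : α ∉ OmegaJK d j k),
              ‖sHat (d := d) (((2 : ℝ) ^ (2 * k))⁻¹) t α‖)
        ≤ C * (((2 : ℝ) ^ (2 * k))⁻¹) ^ (-((d : ℝ) - 2) / 2) *
            (2 : ℝ) ^ (-(j : ℝ) * ((d : ℝ) - 2) / 2) := by
  obtain ⟨K, hK, harc⟩ := exists_integral_FareyArc_iSup_norm_sHat_le (by lia : 2 < d)
  have hsummable : Summable fun q : ℕ ↦ (q : ℝ) ^ (1 - (d : ℝ) / 2) := by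
    have : (5 : ℝ) ≤ d := mod_cast hd
    exact Real.summable_nat_rpow.2 (by linarith)
  refine ⟨K * ∑' q : ℕ, (q : ℝ) ^ (1 - (d : ℝ) / 2) + 1,
    by positivity, fun k j Q hQ ↦ ?_⟩
  set B := (2 ^ j * ((2 : ℝ) ^ (2 * k))⁻¹) ^ (-((d : ℝ) - 2) / 2) with hB
  have hdenominator (q : ℕ) (hq : q ∈ Q) :
      ∑ a ∈ (Finset.Icc 1 q).filter (fun a => Nat.Coprime a q), ∫ t in FareyArc k a q,
        ⨆ (α : Fin d → ℝ) (_ : α ∉ OmegaJK d j k), ‖sHat (((2 : ℝ) ^ (2 * k))⁻¹) t α‖ ≤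
          K * B * q ^ (1 - (d : ℝ) / 2) := by
    obtain ⟨hdvd, hqk⟩ := hQ q hq
    have hq₀ : (0 : ℝ) < q := Nat.cast_pos.2 (Nat.pos_of_dvd_of_pos hdvd (qlcm_pos j))
    calc _ ≤ #{a ∈ Finset.Icc 1 q | a.Coprime q} • (K * q ^ (-(d : ℝ) / 2) * B) :=
          Finset.sum_le_card_nsmul _ _ _ fun a ha ↦ by
            obtain ⟨ha, hcoprime⟩ := Finset.mem_filter.1 ha
            exact harc hdvd hqk (Finset.mem_Icc.1 ha).1 hcoprime
      _ ≤ q * (K * q ^ (-(d : ℝ) / 2) * B) := by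
          rw [nsmul_eq_mul]
          gcongr
          exact (Finset.card_filter_le _ _).trans_eq (by rw [Nat.card_Icc, Nat.add_sub_cancel])
      _ = K * B * q ^ (1 - (d : ℝ) / 2) := by
          rw [sub_eq_add_neg, ← neg_div, Real.rpow_add hq₀, Real.rpow_one]
          ring
  calc _ ≤ ∑ q ∈ Q, K * B * (q : ℝ) ^ (1 - (d : ℝ) / 2) := Finset.sum_le_sum hdenominator
    _ ≤ K * B * ∑' q : ℕ, (q : ℝ) ^ (1 - (d : ℝ) / 2) := by
        rw [← Finset.mul_sum]
        gcongr
        exact hsummable.sum_le_tsum _ fun q _ ↦ by positivity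
    _ ≤ (K * ∑' q : ℕ, (q : ℝ) ^ (1 - (d : ℝ) / 2) + 1) * B := by
        linarith [show 0 ≤ B by positivity]
    _ = _ := by
        rw [hB, two_pow_mul_inv_two_pow_rpow, ← mul_assoc]
        ring_nf

/-- **Major-arc estimate over denominators dividing `q_j`**:
`∑_{q | q_j} ∑_{(a,q)=1} ∫_{V_{a,q}} sup_{α ∈ Ω_{j,k}^c} |ŝ_t(α)| dt
  ≤ C_d ε^{-(d-2)/2} 2^{-j(d-2)/4}`. -/
theorem major_arc_estimate (d : ℕ) (hd : 5 ≤ d) :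
    ∃ C : ℝ, 0 < C ∧ ∀ (k j : ℕ), 1 ≤ j → (j : ℝ) ≤ Real.logb 2 (k : ℝ) - 2 →
      (∑ q ∈ (Finset.Icc 1 (2 ^ k)).filter (fun q => q ∣ qlcm j),
        ∑ a ∈ (Finset.Icc 1 q).filter (fun a => Nat.Coprime a q),
          ∫ t in FareyArc k a q,
            ⨆ (α : Fin d → ℝ) (_ : α ∉ OmegaJK d j k),
              ‖sHat (d := d) (((2 : ℝ) ^ (2 * k))⁻¹) t α‖)
        ≤ C * (((2 : ℝ) ^ (2 * k))⁻¹) ^ (-((d : ℝ) - 2) / 2) *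
            (2 : ℝ) ^ (-(j : ℝ) * ((d : ℝ) - 2) / 4) := by
  obtain ⟨C, hC, hbound⟩ := major_arc_estimate_general d hd
  refine ⟨C, hC, fun k j _ hj ↦ (hbound k j _ fun q hq ↦ ?_).trans ?_⟩
  · have hdvd := (Finset.mem_filter.1 hq).2
    exact ⟨hdvd, two_mul_le_two_pow_of_dvd_qlcm hj hdvd⟩
  · have hd₂ : (2 : ℝ) ≤ d := mod_cast (by lia : 2 ≤ d)
    gcongr C * _ * ?_
    refine Real.rpow_le_rpow_of_exponent_le one_le_two ?_
    linarith [mul_nonneg (Nat.cast_nonneg (α := ℝ) j) (sub_nonneg.2 hd₂)]
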